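/- arXiv:0809.0602 — 2 statements merged into one kernel-verified Lean document; each statement's English description precedes it below -/
import Mathlib

section
/- Let d : ℤ → ℂ be defined by d₀ = π and d_k = i/k for k ≠ 0. Then for every θ ∈ (0, 2π), the symmetric partial sums Σ_{k=−N}^{N} d_k e^{ikθ} converge to θ as N → ∞. -/
open Filter Topology in
theorem saw_tendsto_log (z : ℂ) (hz : ‖z‖ = 1) (hz1 : z ≠ 1) (hs : 1 - z ∈ Complex.slitPlane) :
    Tendsto (fun n : ℕ => ∑ i ∈ Finset.range n, z ^ i / (i : ℂ)) atTop
      (𝓝 (-Complex.log (1 - z))) := by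
  have hc : CauchySeq (fun n : ℕ => ∑ i ∈ Finset.range n, (1 / ((i : ℝ) + 1)) • z ^ (i + 1)) := by
    refine Antitone.cauchySeq_series_mul_of_tendsto_zero_of_bounded (b := 2 / ‖z - 1‖) ?_
      tendsto_one_div_add_atTop_nhds_zero_nat ?_
    · intro a b hab
      have : (a : ℝ) ≤ b := by exact_mod_cast hab
      dsimp only
      gcongr
    · intro n
      simp_rw [pow_succ]
      rw [← Finset.sum_mul, geom_sum_eq hz1, norm_mul, hz, mul_one, norm_div]
      gcongr
      calc ‖z ^ n - 1‖ ≤ ‖z ^ n‖ + ‖(1 : ℂ)‖ := norm_sub_le _ _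
        _ = 2 := by rw [norm_pow, hz]; norm_num
  obtain ⟨l, hl⟩ := cauchySeq_tendsto_of_complete hc
  have hl' : Tendsto (fun n : ℕ => ∑ i ∈ Finset.range n, z ^ i / (i : ℂ)) atTop (𝓝 l) := by
    rw [← tendsto_add_atTop_iff_nat 1]
    refine hl.congr fun n => ?_
    rw [Finset.sum_range_succ']
    simp only [Nat.cast_zero, div_zero, add_zero]
    refine Finset.sum_congr rfl fun i _ => ?_
    rw [Complex.real_smul]
    push_cast
    ring
  have hA := Complex.tendsto_tsum_powerSeries_nhdsWithin_lt hl'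
  rw [tendsto_map'_iff] at hA
  have hB : Tendsto (fun x : ℝ => -Complex.log (1 - z * (x : ℂ))) (𝓝[<] 1)
      (𝓝 (-Complex.log (1 - z))) := by
    have : ContinuousAt (fun x : ℝ => -Complex.log (1 - z * (x : ℂ))) 1 := by
      refine ContinuousAt.neg (ContinuousAt.clog (by fun_prop) (by simpa using hs))
    have h2 := this.tendsto
    simp only [Complex.ofReal_one, mul_one] at h2
    exact h2.mono_left nhdsWithin_le_nhds
  have hE : l = -Complex.log (1 - z) := by
    refine tendsto_nhds_unique (hA.congr' ?_) hB
    have h0 : ∀ᶠ x : ℝ in 𝓝[<] 1, x ∈ Set.Ioo (0 : ℝ) 1 := Ioo_mem_nhdsLT one_pos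
    filter_upwards [h0] with x hx
    have hn : ‖z * (x : ℂ)‖ < 1 := by
      rw [norm_mul, hz, one_mul, Complex.norm_real, Real.norm_eq_abs, abs_of_pos hx.1]
      exact hx.2
    rw [← (Complex.hasSum_taylorSeries_neg_log hn).tsum_eq]
    simp only [Function.comp]
    refine tsum_congr fun n => ?_
    rw [mul_pow]
    ring
  rwa [← hE]

theorem saw_one_sub (θ : ℝ) : 1 - Complex.exp ((θ : ℂ) * Complex.I) =
    ((2 * Real.sin (θ / 2) : ℝ) : ℂ) * (Complex.cos (((θ - Real.pi) / 2 : ℝ) : ℂ)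
      + Complex.sin (((θ - Real.pi) / 2 : ℝ) : ℂ) * Complex.I) := by
  have h1 : (θ - Real.pi) / 2 = θ / 2 - Real.pi / 2 := by ring
  have h2 : θ = 2 * (θ / 2) := by ring
  rw [← Complex.ofReal_cos, ← Complex.ofReal_sin, h1, Real.cos_sub_pi_div_two,
    Real.sin_sub_pi_div_two, Complex.exp_mul_I, ← Complex.ofReal_cos, ← Complex.ofReal_sin]
  have hc : Real.cos θ = 1 - 2 * Real.sin (θ / 2) ^ 2 := by
    conv_lhs => rw [h2, Real.cos_two_mul, Real.cos_sq']
    ring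
  have hs : Real.sin θ = 2 * Real.sin (θ / 2) * Real.cos (θ / 2) := by
    conv_lhs => rw [h2, Real.sin_two_mul]
  rw [hc, hs]
  push_cast
  ring

theorem saw_partial (d : ℤ → ℂ)
    (hd0 : d 0 = (Real.pi : ℂ))
    (hdk : ∀ k : ℤ, k ≠ 0 → d k = Complex.I / (k : ℂ)) (θ : ℝ) (N : ℕ) :
    ∑ k ∈ Finset.Icc (-(N : ℤ)) (N : ℤ), d k * Complex.exp ((k : ℂ) * (θ : ℂ) * Complex.I) =
      ((Real.pi - 2 * (∑ i ∈ Finset.range (N + 1),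
        Complex.exp ((θ : ℂ) * Complex.I) ^ i / (i : ℂ)).im : ℝ) : ℂ) := by
  induction N with
  | zero => simp [hd0]
  | succ n ih =>
    have hI : Finset.Icc (-((n + 1 : ℕ) : ℤ)) ((n + 1 : ℕ) : ℤ) =
        insert (-((n + 1 : ℕ) : ℤ)) (insert ((n + 1 : ℕ) : ℤ)
          (Finset.Icc (-(n : ℤ)) (n : ℤ))) := by
      ext x
      simp only [Finset.mem_Icc, Finset.mem_insert]
      omega
    rw [hI, Finset.sum_insert, Finset.sum_insert, ih, hdk _ (by omega), hdk _ (by omega),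
      Finset.sum_range_succ _ (n + 1), Complex.add_im, ← Complex.exp_nat_mul]
    · have e1 : Complex.exp (((n + 1 : ℕ) : ℂ) * ((θ : ℂ) * Complex.I)) =
          Complex.cos (((n + 1 : ℕ) * θ : ℝ) : ℂ)
            + Complex.sin (((n + 1 : ℕ) * θ : ℝ) : ℂ) * Complex.I := by
        rw [← Complex.exp_mul_I]; congr 1; push_cast; ring
      have e2 : Complex.exp (((((n + 1 : ℕ) : ℤ)) : ℂ) * (θ : ℂ) * Complex.I) =
          Complex.cos (((n + 1 : ℕ) * θ : ℝ) : ℂ)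
            + Complex.sin (((n + 1 : ℕ) * θ : ℝ) : ℂ) * Complex.I := by
        rw [← Complex.exp_mul_I]; congr 1; push_cast; ring
      have e3 : Complex.exp (((-((n + 1 : ℕ) : ℤ) : ℤ) : ℂ) * (θ : ℂ) * Complex.I) =
          Complex.cos (((n + 1 : ℕ) * θ : ℝ) : ℂ)
            - Complex.sin (((n + 1 : ℕ) * θ : ℝ) : ℂ) * Complex.I := by
        rw [sub_eq_add_neg, ← neg_mul, ← Complex.sin_neg, ← Complex.cos_neg, ← Complex.exp_mul_I]
        congr 1; push_cast; ring
      rw [e1, e2, e3, Complex.div_natCast_im, ← Complex.ofReal_cos, ← Complex.ofReal_sin]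
      have him : ((Real.cos ((n + 1 : ℕ) * θ) : ℂ)
          + (Real.sin ((n + 1 : ℕ) * θ) : ℂ) * Complex.I).im = Real.sin ((n + 1 : ℕ) * θ) := by
        rw [Complex.add_im, Complex.im_ofReal_mul, Complex.ofReal_im, Complex.I_im]; ring
      rw [him]
      generalize Real.cos ((n + 1 : ℕ) * θ) = c
      generalize Real.sin ((n + 1 : ℕ) * θ) = s
      have hn : ((n : ℂ) + 1) ≠ 0 := by exact_mod_cast Nat.succ_ne_zero n
      push_cast
      field_simp
      linear_combination (2 * (s : ℂ)) * Complex.I_sq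
    · simp
    · simp only [Finset.mem_insert, Finset.mem_Icc]
      omega

/-- The symmetric partial sums of the Fourier series of the sawtooth function, with
coefficients `d₀ = π` and `d_k = i/k` for `k ≠ 0`, converge to `θ` for `θ ∈ (0, 2π)`. -/
theorem sawtooth_fourier_series_converges (d : ℤ → ℂ)
    (hd0 : d 0 = (Real.pi : ℂ))
    (hdk : ∀ k : ℤ, k ≠ 0 → d k = Complex.I / (k : ℂ)) :
    ∀ θ : ℝ, θ ∈ Set.Ioo 0 (2 * Real.pi) →
      Filter.Tendsto
        (fun N : ℕ => ∑ k ∈ Finset.Icc (-(N : ℤ)) (N : ℤ),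
          d k * Complex.exp ((k : ℂ) * (θ : ℂ) * Complex.I))
        Filter.atTop (nhds ((θ : ℝ) : ℂ)) := by
  intro θ hθ
  obtain ⟨h0, h2⟩ := hθ
  have hsin : 0 < 2 * Real.sin (θ / 2) := by
    have := Real.sin_pos_of_pos_of_lt_pi (x := θ / 2) (by linarith) (by linarith)
    linarith
  have harg : Complex.arg (1 - Complex.exp ((θ : ℂ) * Complex.I)) = (θ - Real.pi) / 2 := by
    rw [saw_one_sub]
    exact Complex.arg_mul_cos_add_sin_mul_I hsin ⟨by linarith, by linarith⟩
  have hne : 1 - Complex.exp ((θ : ℂ) * Complex.I) ≠ 0 := by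
    rw [saw_one_sub, ← Complex.exp_mul_I]
    exact mul_ne_zero (by exact_mod_cast hsin.ne') (Complex.exp_ne_zero _)
  have hs : 1 - Complex.exp ((θ : ℂ) * Complex.I) ∈ Complex.slitPlane := by
    rw [Complex.mem_slitPlane_iff_arg, harg]
    exact ⟨by linarith, hne⟩
  have hT := saw_tendsto_log _ (Complex.norm_exp_ofReal_mul_I θ)
    (fun h => hne (by rw [h, sub_self])) hs
  have hT2 := (Complex.continuous_im.tendsto _).comp
    ((Filter.tendsto_add_atTop_iff_nat 1).mpr hT)
  rw [Complex.neg_im, Complex.log_im, harg] at hT2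
  have hT3 := (Complex.continuous_ofReal.tendsto _).comp
    ((hT2.const_mul 2).const_sub Real.pi)
  have e : Real.pi - 2 * -((θ - Real.pi) / 2) = θ := by ring
  rw [e] at hT3
  refine hT3.congr fun N => ?_
  rw [saw_partial d hd0 hdk]
  rfl
end

section
/- Let γ ∈ (0, π) and let χ̃_γ(x) = χ_γ(x)/∫_{−γ}^{γ} χ_γ(y) dy be the normalized bump, where χ_γ(x) = (1 − (x/γ)²)³·1_{[−γ,γ]}(x). Let c_k denote the k-th Fourier coefficient of the 2π-periodic convolution f ⋆ χ̃_γ, where f is the 2π-periodic sawtooth with f(θ) = θ on [0, 2π). Then the series Σ_{k∈ℤ} c_k e^{ikθ} converges absolutely for every θ, and Σ_{k∈ℤ} c_k e^{ikθ} = θ for all θ ∈ (γ, 2π − γ). -/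
/-- The compactly supported bump `χ_γ(x) = (1 - (x/γ)²)³` on `[-γ, γ]`, extended by zero. -/
noncomputable def bumpChi (γ x : ℝ) : ℝ :=
  if |x| ≤ γ then (1 - (x / γ) ^ 2) ^ 3 else 0

open MeasureTheory in
theorem aux_fourier (h h' : ℝ → ℂ) (hd : ∀ x, HasDerivAt h (h' x) x) (hc : Continuous h')
    (hp : h (-Real.pi) = h (Real.pi)) (c : ℤ → ℂ)
    (hck : ∀ k : ℤ, c k = (1 / (2 * Real.pi) : ℂ) *
      ∫ θ in (-Real.pi)..(-Real.pi + 2 * Real.pi), h θ *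
          Complex.exp (-(k : ℂ) * (θ : ℂ) * Complex.I)) :
    (Summable fun k => ‖c k‖) ∧ ∀ θ ∈ Set.Ico (-Real.pi) Real.pi,
      HasSum (fun k : ℤ => c k * Complex.exp ((k : ℂ) * (θ : ℂ) * Complex.I)) (h θ) := by
  have hpi := Real.pi_pos
  have : Fact (0 < 2 * Real.pi) := ⟨by positivity⟩
  have hab : -Real.pi < -Real.pi + 2 * Real.pi := by linarith
  have hb : -Real.pi + 2 * Real.pi = Real.pi := by ring
  have hpC : (Real.pi : ℂ) ≠ 0 := by exact_mod_cast hpi.ne'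
  have hexp : ∀ (n : ℤ) (x : ℝ), (fourier n (x : AddCircle (2 * Real.pi)) : ℂ)
      = Complex.exp ((n : ℂ) * (x : ℂ) * Complex.I) := by
    intro n x
    rw [fourier_coe_apply]
    congr 1
    push_cast
    field_simp
  have hcc : ∀ k, c k = fourierCoeffOn hab h k := by
    intro k
    rw [hck, fourierCoeffOn_eq_integral]
    rw [add_sub_cancel_left, Complex.real_smul]
    push_cast
    congr 1
    apply intervalIntegral.integral_congr
    intro x _
    simp only [hexp]
    push_cast
    rw [smul_eq_mul, mul_comm]
  have hL : MemLp h' 2 (volume.restrict (Set.Ioc (-Real.pi) (-Real.pi + 2 * Real.pi))) := by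
    obtain ⟨C, hC⟩ := (isCompact_Icc (a := -Real.pi)
      (b := -Real.pi + 2 * Real.pi)).exists_bound_of_continuousOn hc.continuousOn
    refine MemLp.of_bound hc.aestronglyMeasurable C ?_
    filter_upwards [ae_restrict_mem measurableSet_Ioc] with x hx
    exact hC x (Set.Ioc_subset_Icc_self hx)
  have hsq := (hasSum_sq_fourierCoeffOn hab hL).summable
  have hone : Summable fun k : ℤ => 1 / (k : ℝ) ^ 2 :=
    Real.summable_one_div_int_pow.mpr (by norm_num)
  have hsum : Summable fun k => ‖c k‖ := by
    rw [← (Set.finite_singleton (0 : ℤ)).summable_compl_iff]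
    refine Summable.of_nonneg_of_le (fun _ => norm_nonneg _) ?_
      ((hsq.add hone).subtype _)
    rintro ⟨k, hk⟩
    have hk0 : k ≠ 0 := hk
    simp only [Function.comp_apply]
    rw [hcc, fourierCoeffOn_of_hasDerivAt hab hk0 (fun x _ => hd x)
      (hc.intervalIntegrable _ _)]
    rw [show h (-Real.pi + 2 * Real.pi) - h (-Real.pi) = 0 by rw [hb, hp, sub_self]]
    set d := fourierCoeffOn hab h' k
    have : (1 / (-2 * (Real.pi : ℂ) * Complex.I * k) *
      (fourier (-k) ((-Real.pi : ℝ) : AddCircle (-Real.pi + 2 * Real.pi - -Real.pi)) * 0 -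
        (((-Real.pi + 2 * Real.pi : ℝ) : ℂ) - ((-Real.pi : ℝ) : ℂ)) * d)) = d / (Complex.I * k) := by
      have : (k : ℂ) ≠ 0 := by exact_mod_cast hk0
      push_cast
      field_simp [Complex.I_ne_zero]
      ring
    rw [this, norm_div, norm_mul, Complex.norm_I, one_mul, Complex.norm_intCast]
    have h2 : (1 : ℝ) / (k : ℝ) ^ 2 = (1 / |(k : ℝ)|) ^ 2 := by rw [div_pow, sq_abs, one_pow]
    change _ ≤ ‖d‖ ^ 2 + 1 / (k : ℝ) ^ 2
    rw [h2, div_eq_mul_one_div]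
    nlinarith [sq_nonneg (‖d‖ - 1 / |(k : ℝ)|), sq_nonneg (‖d‖), sq_nonneg (1 / |(k : ℝ)|)]
  refine ⟨hsum, ?_⟩
  intro θ hθ
  have hcont : Continuous (AddCircle.liftIco (2 * Real.pi) (-Real.pi) h) :=
    AddCircle.liftIco_continuous (by rw [hb, hp])
      (fun x _ => (hd x).continuousAt.continuousWithinAt)
  obtain ⟨G, hGe⟩ : ∃ G : C(AddCircle (2 * Real.pi), ℂ),
      (G : AddCircle (2 * Real.pi) → ℂ) = AddCircle.liftIco (2 * Real.pi) (-Real.pi) h :=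
    ⟨⟨_, hcont⟩, rfl⟩
  have hG : ∀ k, fourierCoeff G k = c k := by
    intro k
    rw [hcc, hGe]
    exact fourierCoeff_liftIco_eq h k
  have := has_pointwise_sum_fourier_series_of_summable (f := G)
    (by rw [show fourierCoeff (G : AddCircle (2 * Real.pi) → ℂ) = c from funext hG]; exact hsum.of_norm) (θ : AddCircle (2 * Real.pi))
  simp only [hG, hexp, smul_eq_mul] at this
  have hv : G (θ : AddCircle (2 * Real.pi)) = h θ := by
    rw [hGe]
    exact AddCircle.liftIco_coe_apply (by rwa [hb])
  rwa [hv] at this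

theorem bumpChi_eq (γ : ℝ) (hγ : 0 < γ) (x : ℝ) :
    bumpChi γ x = (max 0 (1 - (x / γ) ^ 2)) ^ 3 := by
  unfold bumpChi
  have : |x| ≤ γ ↔ 0 ≤ 1 - (x / γ) ^ 2 := by
    rw [sub_nonneg, sq_le_one_iff_abs_le_one, abs_div, abs_of_pos hγ, div_le_one hγ]
  split_ifs with h
  · rw [max_eq_right (this.1 h)]
  · rw [max_eq_left (by rw [this] at h; linarith)]
    norm_num

open MeasureTheory in
theorem aux_conv (f : ℝ → ℝ)
    (hf : ∀ θ : ℝ, θ ∈ Set.Ico 0 (2 * Real.pi) → ∀ l : ℤ, f (θ + 2 * Real.pi * l) = θ)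
    (γ : ℝ) (hγ : γ ∈ Set.Ioo 0 Real.pi) (w : ℝ → ℝ) (hw : Continuous w)
    (hw0 : ∀ y, γ ≤ |y| → w y = 0) (hev : ∀ y, w (-y) = w y)
    (hw1 : ∫ y in (-γ)..γ, w y = 1) (θ : ℝ) (hθ : θ ∈ Set.Icc (-Real.pi) Real.pi) :
    ∫ y : ℝ, f (θ - y) * w y = θ + 2 * Real.pi * ∫ y in θ..Real.pi, w y := by
  obtain ⟨h0, h1⟩ := hγ
  obtain ⟨ht1, ht2⟩ := hθ
  have hcs : HasCompactSupport w := by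
    refine HasCompactSupport.intro (isCompact_Icc (a := -γ) (b := γ)) ?_
    intro x hx
    apply hw0
    by_contra! hlt
    exact hx ⟨(abs_lt.1 hlt).1.le, (abs_lt.1 hlt).2.le⟩
  have hwi : Integrable w := hw.integrable_of_hasCompactSupport hcs
  have hywi : Integrable (fun y => y * w y) :=
    (continuous_id.mul hw).integrable_of_hasCompactSupport hcs.mul_left
  have hI1 : ∫ y, w y = 1 := by
    rw [← hw1]
    symm
    apply intervalIntegral.integral_eq_integral_of_support_subset
    intro x hx
    have : |x| < γ := by
      by_contra! hge
      exact hx (hw0 x hge)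
    exact ⟨(abs_lt.1 this).1, (abs_lt.1 this).2.le⟩
  have hI0 : ∫ y, y * w y = 0 := by
    have := integral_neg_eq_self (fun y => y * w y) (volume : Measure ℝ)
    simp only [hev, neg_mul, integral_neg] at this
    linarith
  have hpt : ∀ y, f (θ - y) * w y
      = θ * w y - y * w y + 2 * Real.pi * (Set.Ioi θ).indicator w y := by
    intro y
    by_cases hy : γ ≤ |y|
    · simp [Set.indicator_apply, hw0 y hy]
    · push Not at hy
      obtain ⟨hy1, hy2⟩ := abs_lt.1 hy
      by_cases hlt : θ < y
      · have := hf (θ - y + 2 * Real.pi) ⟨by linarith, by linarith⟩ (-1)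
        rw [show θ - y + 2 * Real.pi + 2 * Real.pi * ((-1 : ℤ) : ℝ) = θ - y by
          push_cast; ring] at this
        rw [this, Set.indicator_of_mem (by exact hlt)]
        ring
      · have := hf (θ - y) ⟨by linarith, by linarith⟩ 0
        rw [Int.cast_zero, mul_zero, add_zero] at this
        rw [this, Set.indicator_of_notMem (by exact hlt)]
        ring
  have hI2 : ∫ y, (Set.Ioi θ).indicator w y = ∫ y in θ..Real.pi, w y := by
    rw [intervalIntegral.integral_of_le ht2, ← integral_indicator measurableSet_Ioc]
    congr 1
    ext y
    by_cases hy : γ ≤ |y|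
    · simp [Set.indicator_apply, hw0 y hy]
    · push Not at hy
      have : y ≤ Real.pi := by linarith [(abs_lt.1 hy).2]
      simp [Set.indicator_apply, this]
  simp_rw [hpt]
  have hsub : Integrable (fun y => θ * w y - y * w y) := (hwi.const_mul θ).sub hywi
  rw [integral_add hsub
    ((hwi.indicator measurableSet_Ioi).const_mul _),
    integral_sub (hwi.const_mul θ) hywi, integral_const_mul, integral_const_mul, hI1, hI0, hI2]
  ring

theorem f_periodic (f : ℝ → ℝ)
    (hf : ∀ θ : ℝ, θ ∈ Set.Ico 0 (2 * Real.pi) → ∀ l : ℤ, f (θ + 2 * Real.pi * l) = θ) :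
    Function.Periodic f (2 * Real.pi) := by
  intro x
  have hp : (0 : ℝ) < 2 * Real.pi := by positivity
  have hm := toIcoMod_mem_Ico hp 0 x
  rw [zero_add] at hm
  have hx : x = toIcoMod hp 0 x + 2 * Real.pi * (toIcoDiv hp 0 x : ℤ) := by
    conv_lhs => rw [← toIcoMod_add_toIcoDiv_zsmul hp 0 x]
    rw [zsmul_eq_mul, mul_comm ((toIcoDiv hp 0 x : ℤ) : ℝ)]
  have e1 := hf _ hm (toIcoDiv hp 0 x)
  have e2 := hf _ hm (toIcoDiv hp 0 x + 1)
  rw [← hx] at e1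
  rw [e1]
  rw [show toIcoMod hp 0 x + 2 * Real.pi * ((toIcoDiv hp 0 x + 1 : ℤ) : ℝ)
    = x + 2 * Real.pi by push_cast; linarith] at e2
  exact e2

/-- The Fourier series of the convolution of the sawtooth with the normalized bump converges
absolutely everywhere, and sums to `θ` on `(γ, 2π - γ)`. -/
theorem sawtooth_smoothed_fourier_series (f : ℝ → ℝ)
    (hf : ∀ θ : ℝ, θ ∈ Set.Ico 0 (2 * Real.pi) → ∀ l : ℤ, f (θ + 2 * Real.pi * l) = θ)
    (γ : ℝ) (hγ : γ ∈ Set.Ioo 0 Real.pi)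
    (c : ℤ → ℂ)
    (hc : ∀ k : ℤ, c k = (1 / (2 * Real.pi) : ℂ) *
      ∫ θ in (0 : ℝ)..(2 * Real.pi),
        ((∫ y : ℝ, f (θ - y) * (bumpChi γ y / ∫ z in (-γ)..γ, bumpChi γ z) : ℝ) : ℂ) *
          Complex.exp (-(k : ℂ) * (θ : ℂ) * Complex.I)) :
    (∀ θ : ℝ, Summable (fun k : ℤ => ‖c k * Complex.exp ((k : ℂ) * (θ : ℂ) * Complex.I)‖)) ∧
    ∀ θ : ℝ, θ ∈ Set.Ioo γ (2 * Real.pi - γ) →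
      ∑' k : ℤ, c k * Complex.exp ((k : ℂ) * (θ : ℂ) * Complex.I) = (θ : ℂ) := by
  have hpi := Real.pi_pos
  have h0 := hγ.1
  have h1 := hγ.2
  have hbc : Continuous (bumpChi γ) := by
    rw [show bumpChi γ = fun x => (max 0 (1 - (x / γ) ^ 2)) ^ 3 from funext (bumpChi_eq γ h0)]
    fun_prop
  set J := ∫ z in (-γ)..γ, bumpChi γ z with hJ
  have hJpos : 0 < J := by
    apply intervalIntegral.intervalIntegral_pos_of_pos_on (hbc.intervalIntegrable _ _) _
      (by linarith)
    intro x hx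
    have hlt : |x| < γ := abs_lt.2 hx
    rw [bumpChi_eq γ h0]
    have : (x / γ) ^ 2 < 1 := by
      rw [sq_lt_one_iff_abs_lt_one, abs_div, abs_of_pos h0, div_lt_one h0]
      exact hlt
    exact pow_pos (lt_max_of_lt_right (by linarith)) 3
  set w : ℝ → ℝ := fun y => bumpChi γ y / J with hwdef
  have hw : Continuous w := hbc.div_const _
  have hw0 : ∀ y, γ ≤ |y| → w y = 0 := by
    intro y hy
    have : (1 : ℝ) ≤ (y / γ) ^ 2 := by
      rw [one_le_sq_iff_one_le_abs, abs_div, abs_of_pos h0, one_le_div h0]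
      exact hy
    simp only [hwdef]
    rw [bumpChi_eq γ h0, max_eq_left (by linarith)]
    simp
  have hev : ∀ y, w (-y) = w y := by
    intro y
    simp only [hwdef, bumpChi, abs_neg, neg_div, neg_sq]
  have hw1 : ∫ y in (-γ)..γ, w y = 1 := by
    simp only [hwdef]
    rw [intervalIntegral.integral_div, ← hJ, div_self hJpos.ne']
  have hfp := f_periodic f hf
  let g : ℝ → ℝ := fun θ => ∫ y : ℝ, f (θ - y) * w y
  have hgp : Function.Periodic g (2 * Real.pi) := by
    intro θ
    simp only [g]
    congr 1
    ext y
    rw [show θ + 2 * Real.pi - y = θ - y + 2 * Real.pi by ring, hfp]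
  let h : ℝ → ℝ := fun θ => θ + 2 * Real.pi * ∫ y in θ..Real.pi, w y
  have hgh : ∀ θ ∈ Set.Icc (-Real.pi) Real.pi, g θ = h θ := fun θ hθ =>
    aux_conv f hf γ hγ w hw hw0 hev hw1 θ hθ
  have hright : ∀ θ, γ ≤ θ → θ ≤ Real.pi → h θ = θ := by
    intro θ ha hb
    simp only [h]
    rw [intervalIntegral.integral_zero_ae]
    · ring
    · refine Filter.Eventually.of_forall fun y hy => ?_
      rw [Set.uIoc_of_le hb] at hy
      exact hw0 y (le_trans (by linarith [hy.1]) (le_abs_self y))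
  have hleft : ∀ θ, -Real.pi ≤ θ → θ ≤ -γ → h θ = θ + 2 * Real.pi := by
    intro θ ha hb
    have i1 : ∫ y in θ..(-γ), w y = 0 := by
      apply intervalIntegral.integral_zero_ae
      refine Filter.Eventually.of_forall fun y hy => ?_
      rw [Set.uIoc_of_le hb] at hy
      exact hw0 y (le_trans (by linarith [hy.2]) (neg_le_abs y))
    have i2 : ∫ y in γ..Real.pi, w y = 0 := by
      apply intervalIntegral.integral_zero_ae
      refine Filter.Eventually.of_forall fun y hy => ?_
      rw [Set.uIoc_of_le h1.le] at hy
      exact hw0 y (le_trans (by linarith [hy.1]) (le_abs_self y))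
    have ii : ∀ a b, IntervalIntegrable w MeasureTheory.volume a b :=
      fun a b => hw.intervalIntegrable a b
    simp only [h]
    rw [← intervalIntegral.integral_add_adjacent_intervals (ii θ (-γ)) (ii (-γ) Real.pi),
      ← intervalIntegral.integral_add_adjacent_intervals (ii (-γ) γ) (ii γ Real.pi),
      i1, i2, hw1]
    ring
  have hder : ∀ x, HasDerivAt (fun θ => ((h θ : ℝ) : ℂ))
      ((1 + 2 * Real.pi * (-w x) : ℝ) : ℂ) x := by
    intro x
    have hi : HasDerivAt (fun θ => ∫ y in θ..Real.pi, w y) (-w x) x :=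
      intervalIntegral.integral_hasDerivAt_left (hw.intervalIntegrable _ _)
        (hw.stronglyMeasurableAtFilter _ _) hw.continuousAt
    exact ((hasDerivAt_id x).add (hi.const_mul (2 * Real.pi))).ofReal_comp
  have key := aux_fourier (fun θ => ((h θ : ℝ) : ℂ)) _ hder (by fun_prop)
    (by
      rw [hright Real.pi h1.le le_rfl, hleft (-Real.pi) le_rfl (by linarith)]
      push_cast; ring) c (by
      intro k
      rw [hc k]
      congr 1
      have hper : Function.Periodic (fun θ : ℝ => ((g θ : ℝ) : ℂ) *
          Complex.exp (-(k : ℂ) * (θ : ℂ) * Complex.I)) (2 * Real.pi) := by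
        intro x
        simp only
        rw [hgp x]
        congr 1
        rw [Complex.exp_eq_exp_iff_exists_int]
        refine ⟨-k, ?_⟩
        push_cast
        ring
      have e := hper.intervalIntegral_add_eq 0 (-Real.pi)
      rw [zero_add] at e
      refine e.trans ?_
      apply intervalIntegral.integral_congr
      intro x hx
      rw [Set.uIcc_of_le (by linarith)] at hx
      simp only
      rw [hgh x ⟨hx.1, by linarith [hx.2]⟩])
  obtain ⟨hs, hsum⟩ := key
  refine ⟨?_, ?_⟩
  · intro θ
    refine hs.congr fun k => ?_
    rw [norm_mul, show (k : ℂ) * (θ : ℂ) * Complex.I = ((k * θ : ℝ) : ℂ) * Complex.I by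
      push_cast; ring, Complex.norm_exp_ofReal_mul_I, mul_one]
  · rintro θ ⟨ha, hb⟩
    rcases lt_or_ge θ Real.pi with hlt | hge
    · rw [(hsum θ ⟨by linarith, hlt⟩).tsum_eq, hright θ ha.le hlt.le]
    · have := (hsum (θ - 2 * Real.pi) ⟨by linarith, by linarith⟩).tsum_eq
      rw [hleft _ (by linarith) (by linarith), sub_add_cancel] at this
      refine Eq.trans ?_ this
      congr 1
      ext k
      congr 1
      rw [Complex.exp_eq_exp_iff_exists_int]
      refine ⟨k, ?_⟩
      push_cast
      ring
end
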